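/- There exists a constant c > 0 such that for infinitely many positive integers n there is a plane straight-line graph on a set of n points in ℝ² that contains at least c·1.7003ⁿ star-shaped polygons. -/

import Mathlib

open scoped BigOperators

noncomputable section

/-- Points of the plane. -/
abbrev Pt : Type := ℝ × ℝ

/-- Dot product on the plane. -/
def dotp (a b : Pt) : ℝ := a.1 * b.1 + a.2 * b.2

/-- The geometric conditions making `(V, E)` a plane straight-line graph:
every edge joins two distinct points of `V`, no point of `V` lies in the open
segment of an edge, and the open segments of two distinct edges are disjoint. -/
def ValidEdges (V : Finset Pt) (E : Finset (Sym2 Pt)) : Prop :=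
  (∀ a b : Pt, s(a, b) ∈ E → a ∈ V ∧ b ∈ V ∧ a ≠ b) ∧
  (∀ a b : Pt, s(a, b) ∈ E → ∀ v ∈ V, v ∉ openSegment ℝ a b) ∧
  (∀ a b c d : Pt, s(a, b) ∈ E → s(c, d) ∈ E → s(a, b) ≠ s(c, d) →
    openSegment ℝ a b ∩ openSegment ℝ c d = ∅)

/-- A plane straight-line graph. -/
structure PSLG where
  V : Finset Pt
  E : Finset (Sym2 Pt)
  valid : ValidEdges V E

/-- A path in `G`: a sequence of at least two vertices, consecutive ones joined by edges. -/
def IsPathIn (G : PSLG) (L : List Pt) : Prop :=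
  2 ≤ L.length ∧ L.Chain' (fun a b => s(a, b) ∈ G.E)

/-- An x-monotone path: x-coordinates strictly increasing along the path. -/
def IsXMonotonePath (G : PSLG) (L : List Pt) : Prop :=
  IsPathIn G L ∧ L.Chain' (fun a b => a.1 < b.1)

/-- Monotonicity of a vertex sequence in direction `u`. -/
def MonotoneInDir (u : Pt) (L : List Pt) : Prop :=
  L.Chain' (fun a b => 0 < dotp (b - a) u)

/-- A monotone path: monotone in some direction `u ≠ 0`. -/
def IsMonotonePath (G : PSLG) (L : List Pt) : Prop :=
  IsPathIn G L ∧ ∃ u : Pt, u ≠ 0 ∧ MonotoneInDir u L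

/-- The number of x-monotone paths in `G`. -/
def xMonCount (G : PSLG) : ℕ := Set.ncard {L : List Pt | IsXMonotonePath G L}

/-- The number of monotone paths in `G`, a path and its reversal counted once. -/
def monPathCount (G : PSLG) : ℕ :=
  Set.ncard {P : Set (List Pt) | ∃ L, IsMonotonePath G L ∧ P = {L, L.reverse}}

/-- Consecutive pairs along a cycle (including the wrap-around pair). -/
def cyclePairs (L : List Pt) : List (Pt × Pt) := L.zip (L.rotate 1)

/-- A cycle in `G`: at least 3 pairwise distinct vertices, cyclically joined by edges. -/
def IsCycleIn (G : PSLG) (L : List Pt) : Prop :=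
  3 ≤ L.length ∧ L.Nodup ∧ ∀ p ∈ cyclePairs L, s(p.1, p.2) ∈ G.E

/-- The union of the closed edge segments of a cycle. -/
def cycleBody (L : List Pt) : Set Pt := ⋃ p ∈ cyclePairs L, segment ℝ p.1 p.2

/-- A star-shaped polygon in `G`: a cycle for which some point `o` sees the boundary
in exactly one point along every ray emanating from `o`. -/
def IsStarShapedPolygon (G : PSLG) (L : List Pt) : Prop :=
  IsCycleIn G L ∧ ∃ o : Pt, ∀ d : Pt, d ≠ 0 →
    ∃! p : Pt, p ∈ cycleBody L ∧ ∃ t : ℝ, 0 ≤ t ∧ p = o + t • d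

/-- The edge set of a cycle, used to count polygons. -/
def cycleEdgeSet (L : List Pt) : Finset (Sym2 Pt) :=
  ((cyclePairs L).map (fun p => s(p.1, p.2))).toFinset

/-- The number of star-shaped polygons in `G`, counted by edge sets. -/
def starCount (G : PSLG) : ℕ :=
  Set.ncard {E' : Finset (Sym2 Pt) | ∃ L, IsStarShapedPolygon G L ∧ E' = cycleEdgeSet L}

/-- Cross product (signed area). -/
def crossp (a b : Pt) : ℝ := a.1 * b.2 - a.2 * b.1

/-- A convex polygon in `G`: a cycle whose vertices are in strictly convex position and
appear along the cycle in their convex-hull cyclic order; equivalently, for every directed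
edge of the cycle all other vertices lie strictly on the same (left or right) side. -/
def IsConvexPolygon (G : PSLG) (L : List Pt) : Prop :=
  IsCycleIn G L ∧
  ((∀ p ∈ cyclePairs L, ∀ v ∈ L, v ≠ p.1 → v ≠ p.2 → 0 < crossp (p.2 - p.1) (v - p.1)) ∨
   (∀ p ∈ cyclePairs L, ∀ v ∈ L, v ≠ p.1 → v ≠ p.2 → crossp (p.2 - p.1) (v - p.1) < 0))

/-- The number of convex polygons in `G`, counted by edge sets. -/
def convexCount (G : PSLG) : ℕ :=
  Set.ncard {E' : Finset (Sym2 Pt) | ∃ L, IsConvexPolygon G L ∧ E' = cycleEdgeSet L}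

/-- A triangulation: an edge-maximal plane straight-line graph. -/
def PSLG.IsTriangulation (G : PSLG) : Prop :=
  ∀ a ∈ G.V, ∀ b ∈ G.V, a ≠ b → s(a, b) ∉ G.E → ¬ ValidEdges G.V (insert s(a, b) G.E)

/-- An orientation of a PSLG: each edge `{a, b}` receives exactly one of the ordered
pairs `(a, b)`, `(b, a)`. -/
def IsOrientation (G : PSLG) (D : Finset (Pt × Pt)) : Prop :=
  (∀ p ∈ D, s(p.1, p.2) ∈ G.E) ∧
  ∀ a b : Pt, s(a, b) ∈ G.E →
    (((a, b) ∈ D ∧ (b, a) ∉ D) ∨ ((b, a) ∈ D ∧ (a, b) ∉ D))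

/-- A directed simple path in a directed graph on points. -/
def IsDirPath (D : Finset (Pt × Pt)) (L : List Pt) : Prop :=
  2 ≤ L.length ∧ L.Nodup ∧ L.Chain' (fun a b => (a, b) ∈ D)

/-- The number of directed simple paths. -/
def dirPathCount (D : Finset (Pt × Pt)) : ℕ := Set.ncard {L : List Pt | IsDirPath D L}

/-- No three of the points of `S` are collinear. -/
def NoThreeCollinear (S : Finset Pt) : Prop :=
  ∀ p ∈ S, ∀ q ∈ S, ∀ r ∈ S, p ≠ q → p ≠ r → q ≠ r → ¬ Collinear ℝ ({p, q, r} : Set Pt)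

/-- A maximal monotone path: not a proper subpath (up to reversal) of another
monotone path of `G`. -/
def IsMaximalMonotonePath (G : PSLG) (L : List Pt) : Prop :=
  IsMonotonePath G L ∧ ∀ M : List Pt, IsMonotonePath G M →
    (L <:+: M ∨ L.reverse <:+: M) → (L = M ∨ L.reverse = M)

/-!
Let `a` and `b` be the leftmost and the rightmost vertex of a plane graph `G`, and let `o` and `w`
be two points far above `G`, with `w` straight above `o`. Joining `w` to `a` and `b` keeps the
graph plane, because these edges are tangents to the convex hull. Every x-monotone path from `a`
to `b` turns counterclockwise around `o` by less than a half-turn and closes up through `w` to a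
polygon that is star-shaped around `o`; different paths give different polygons.

So it remains to find a plane graph with many x-monotone paths. Its vertices alternate between a
parabola and its mirror image, so that same-side chords meet neither the ones on the other side
nor the connecting steps, and its edges are steps of length one, two, four and eight. The numbers
of paths from `0` to `i` satisfy a linear recursion of period eight, whose growth rate over one
period exceeds `1.7003 ^ 8`.
-/

section Separation

lemma neg_crossp (a b : Pt) : -crossp a b = crossp b a := by
  simp only [crossp]
  ring

lemma crossp_self (a : Pt) : crossp a a = 0 := by
  simp only [crossp]
  ring

lemma crossp_add_smul (u a b : Pt) (s t : ℝ) :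
    crossp u (s • a + t • b) = s * crossp u a + t * crossp u b := by
  simp only [crossp, Prod.fst_add, Prod.snd_add, Prod.smul_fst, Prod.smul_snd, smul_eq_mul]
  ring

lemma crossp_sub (u a b : Pt) : crossp u (a - b) = crossp u a - crossp u b := by
  simp only [crossp, Prod.fst_sub, Prod.snd_sub]
  ring

lemma disjoint_openSegment_of_crossp {u a b c d : Pt} {r : ℝ}
    (ha : crossp u a ≤ r) (hb : crossp u b ≤ r) (hc : r ≤ crossp u c) (hd : r ≤ crossp u d)
    (hlt : crossp u a < r ∨ crossp u b < r ∨ r < crossp u c ∨ r < crossp u d) :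
    Disjoint (openSegment ℝ a b) (openSegment ℝ c d) := by
  rw [Set.disjoint_left]
  rintro x ⟨s, t, hs, ht, hst, rfl⟩ ⟨s', t', hs', ht', hst', hx⟩
  have hsum : s * (r - crossp u a) + t * (r - crossp u b) +
      s' * (crossp u c - r) + t' * (crossp u d - r) = 0 := by
    have := congrArg (crossp u) hx
    rw [crossp_add_smul, crossp_add_smul] at this
    linear_combination this + r * hst - r * hst'
  have ha' := mul_nonneg hs.le (sub_nonneg.2 ha)
  have hb' := mul_nonneg ht.le (sub_nonneg.2 hb)
  have hc' := mul_nonneg hs'.le (sub_nonneg.2 hc)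
  have hd' := mul_nonneg ht'.le (sub_nonneg.2 hd)
  rcases hlt with h | h | h | h
  · linarith [mul_pos hs (sub_pos.2 h)]
  · linarith [mul_pos ht (sub_pos.2 h)]
  · linarith [mul_pos hs' (sub_pos.2 h)]
  · linarith [mul_pos ht' (sub_pos.2 h)]

end Separation

section HullEdges

variable {V : Finset Pt} {E : Finset (Sym2 Pt)}

lemma openSegment_eq_of_sym2_eq {M : Type*} [AddCommGroup M] [Module ℝ M] {a b c d : M}
    (h : s(a, b) = s(c, d)) :
    openSegment ℝ a b = openSegment ℝ c d := by
  rcases Sym2.eq_iff.1 h with ⟨rfl, rfl⟩ | ⟨rfl, rfl⟩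
  · rfl
  · exact openSegment_symm ℝ a b

lemma ValidEdges.insert_vertex (h : ValidEdges V E) {w : Pt}
    (hw : ∀ a b : Pt, s(a, b) ∈ E → w ∉ openSegment ℝ a b) : ValidEdges (insert w V) E := by
  refine ⟨fun a b hab => ?_, fun a b hab v hv => ?_, h.2.2⟩
  · obtain ⟨ha, hb, hne⟩ := h.1 a b hab
    exact ⟨Finset.mem_insert_of_mem ha, Finset.mem_insert_of_mem hb, hne⟩
  · rcases Finset.mem_insert.1 hv with rfl | hv
    · exact hw a b hab
    · exact h.2.1 a b hab v hv

lemma ValidEdges.insert_edge (h : ValidEdges V E) {a b : Pt} (ha : a ∈ V) (hb : b ∈ V)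
    (hab : a ≠ b) (hV : ∀ v ∈ V, v ∉ openSegment ℝ a b)
    (hE : ∀ c d : Pt, s(c, d) ∈ E → s(c, d) ≠ s(a, b) →
      Disjoint (openSegment ℝ a b) (openSegment ℝ c d)) :
    ValidEdges V (insert s(a, b) E) := by
  refine ⟨fun c d hcd => ?_, fun c d hcd v hv => ?_, fun c d c' d' hcd hcd' hne => ?_⟩
  · rcases Finset.mem_insert.1 hcd with hcd | hcd
    · rcases Sym2.eq_iff.1 hcd with ⟨rfl, rfl⟩ | ⟨rfl, rfl⟩
      · exact ⟨ha, hb, hab⟩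
      · exact ⟨hb, ha, hab.symm⟩
    · exact h.1 c d hcd
  · rcases Finset.mem_insert.1 hcd with hcd | hcd
    · exact openSegment_eq_of_sym2_eq hcd ▸ hV v hv
    · exact h.2.1 c d hcd v hv
  · rcases Finset.mem_insert.1 hcd with hcd | hcd <;>
      rcases Finset.mem_insert.1 hcd' with hcd' | hcd'
    · exact absurd (hcd.trans hcd'.symm) hne
    · rw [openSegment_eq_of_sym2_eq hcd]
      exact (hE c' d' hcd' fun e => hne (hcd.trans e.symm)).inter_eq
    · rw [openSegment_eq_of_sym2_eq hcd']
      exact (hE c d hcd fun e => hne (e.trans hcd'.symm)).symm.inter_eq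
    · exact h.2.2 c d c' d' hcd hcd' hne

lemma ValidEdges.insert_hull_edge (h : ValidEdges V E) {a b : Pt} (ha : a ∈ V) (hb : b ∈ V)
    (hab : a ≠ b) (hside : ∀ v ∈ V, v ≠ a → v ≠ b → 0 < crossp (b - a) (v - a)) :
    ValidEdges V (insert s(a, b) E) := by
  set u := b - a with hu
  have hub : crossp u b = crossp u a := by
    rw [← sub_eq_zero, ← crossp_sub, ← hu, crossp_self]
  have hlt : ∀ v ∈ V, v ≠ a → v ≠ b → crossp u a < crossp u v := fun v hv hva hvb => by
    simpa only [crossp_sub, sub_pos] using hside v hv hva hvb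
  have hle : ∀ v ∈ V, crossp u a ≤ crossp u v := fun v hv => by
    by_cases hva : v = a
    · rw [hva]
    by_cases hvb : v = b
    · rw [hvb, hub]
    exact (hlt v hv hva hvb).le
  have hdisj : ∀ c ∈ V, ∀ d ∈ V, (c ≠ a ∧ c ≠ b ∨ d ≠ a ∧ d ≠ b) →
      Disjoint (openSegment ℝ a b) (openSegment ℝ c d) := fun c hc d hd hcd =>
    disjoint_openSegment_of_crossp le_rfl hub.le (hle c hc) (hle d hd)
      (.inr (.inr (hcd.imp (fun h => hlt c hc h.1 h.2) (fun h => hlt d hd h.1 h.2))))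
  refine h.insert_edge ha hb hab (fun v hv hmem => ?_) fun c d hcd hne => ?_
  · by_cases hva : v = a
    · exact hab (left_mem_openSegment_iff.1 (hva ▸ hmem))
    by_cases hvb : v = b
    · exact hab (right_mem_openSegment_iff.1 (hvb ▸ hmem))
    have := hdisj v hv v hv (.inl ⟨hva, hvb⟩)
    rw [openSegment_same, Set.disjoint_singleton_right] at this
    exact this hmem
  · obtain ⟨hc, hd, hcd'⟩ := h.1 c d hcd
    refine hdisj c hc d hd ?_
    contrapose! hne
    obtain rfl | hca := eq_or_ne c a
    · rw [hne.2 hcd'.symm]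
    · obtain rfl := hne.1 hca
      rw [of_not_not fun hda => hcd' (hne.2 hda).symm, Sym2.eq_swap]

lemma ValidEdges.insert_tangents (h : ValidEdges V E) {w a b : Pt} (ha : a ∈ V) (hb : b ∈ V)
    (hwV : w ∉ V) (hleft : ∀ v ∈ V, v ≠ a → 0 < crossp (a - w) (v - w))
    (hright : ∀ v ∈ V, v ≠ b → 0 < crossp (v - w) (b - w)) :
    ValidEdges (insert w V) (insert s(b, w) (insert s(w, a) E)) := by
  have hw_mem := Finset.mem_insert_self w V
  have hne : ∀ v ∈ V, v ≠ w := fun v hv hvw => hwV (hvw ▸ hv)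
  have hle : ∀ v ∈ V, crossp (a - w) w ≤ crossp (a - w) v := fun v hv => by
    rw [← sub_nonneg, ← crossp_sub]
    by_cases hva : v = a
    · rw [hva, crossp_self]
    · exact (hleft v hv hva).le
  have hwE : ValidEdges (insert w V) E := by
    refine h.insert_vertex fun c d hcd => ?_
    obtain ⟨hc, hd, hcd⟩ := h.1 c d hcd
    have hlt : ∀ v ∈ V, v ≠ a → crossp (a - w) w < crossp (a - w) v := fun v hv hva => by
      simpa only [crossp_sub, sub_pos] using hleft v hv hva
    have := disjoint_openSegment_of_crossp le_rfl le_rfl (hle c hc) (hle d hd) <|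
      .inr <| .inr <| (hcd.ne_or_ne a).imp (hlt c hc) (hlt d hd)
    rwa [openSegment_same, Set.disjoint_singleton_left] at this
  refine (hwE.insert_hull_edge hw_mem (Finset.mem_insert_of_mem ha) (hne a ha).symm
    ?_).insert_hull_edge (Finset.mem_insert_of_mem hb) hw_mem (hne b hb) ?_
  · exact fun v hv hvw hva => hleft v (Finset.mem_of_mem_insert_of_ne hv hvw) hva
  · intro v hv hvb hvw
    have := hright v (Finset.mem_of_mem_insert_of_ne hv hvw) hvb
    simp only [crossp, Prod.fst_sub, Prod.snd_sub] at this ⊢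
    linarith

end HullEdges

section StarCriterion

/-- `P` is a section of the cone `o + S` by rays: `P` lies in `o + S`, avoids `o`, and meets every
ray from `o` with a nonzero direction in `S` exactly once. Star-shapedness of a closed curve says
that it is a radial section of the whole plane; this notion allows such a curve to be glued
together from arcs. -/
structure IsRadialSection {E : Type*} [AddCommGroup E] [Module ℝ E] (o : E) (S P : Set E) :
    Prop where
  smul_mem : ∀ d ∈ S, ∀ t : ℝ, 0 ≤ t → t • d ∈ S
  sub_mem : ∀ p ∈ P, p - o ∈ S
  center_notMem : o ∉ P
  existsUnique : ∀ d ∈ S, d ≠ 0 → ∃! p : E, p ∈ P ∧ ∃ t : ℝ, 0 ≤ t ∧ p = o + t • d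

namespace IsRadialSection

variable {E : Type*} [AddCommGroup E] [Module ℝ E] {o : E} {S T P Q : Set E}

lemma existsUnique_union (hP : IsRadialSection o S P) (hQ : IsRadialSection o T Q)
    (hPQ : ∀ d ∈ S, d ∈ T → d ≠ 0 → ∃ p ∈ P, p ∈ Q ∧ ∃ t : ℝ, 0 ≤ t ∧ p = o + t • d)
    {d : E} (hdS : d ∈ S) (hd : d ≠ 0) :
    ∃! p : E, p ∈ P ∪ Q ∧ ∃ t : ℝ, 0 ≤ t ∧ p = o + t • d := by
  obtain ⟨p, ⟨hpP, hpd⟩, huniq⟩ := hP.existsUnique d hdS hd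
  refine ⟨p, ⟨.inl hpP, hpd⟩, ?_⟩
  rintro q ⟨hqP | hqQ, hqd⟩
  · exact huniq q ⟨hqP, hqd⟩
  have hq0 : q - o ≠ 0 := sub_ne_zero.2 fun h => hQ.center_notMem (h ▸ hqQ)
  have hqT : q - o ∈ T := hQ.sub_mem q hqQ
  have hqS : q - o ∈ S := by
    obtain ⟨t, ht, rfl⟩ := hqd
    simpa only [add_sub_cancel_left] using hP.smul_mem d hdS t ht
  obtain ⟨r, hrP, hrQ, hrd⟩ := hPQ (q - o) hqS hqT hq0
  have hqr : q = r := (hQ.existsUnique (q - o) hqT hq0).unique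
    ⟨hqQ, 1, zero_le_one, by rw [one_smul, add_sub_cancel]⟩ ⟨hrQ, hrd⟩
  exact huniq q ⟨hqr ▸ hrP, hqd⟩

lemma union (hP : IsRadialSection o S P) (hQ : IsRadialSection o T Q)
    (hPQ : ∀ d ∈ S, d ∈ T → d ≠ 0 → ∃ p ∈ P, p ∈ Q ∧ ∃ t : ℝ, 0 ≤ t ∧ p = o + t • d) :
    IsRadialSection o (S ∪ T) (P ∪ Q) where
  smul_mem d hd t ht := hd.imp (hP.smul_mem d · t ht) (hQ.smul_mem d · t ht)
  sub_mem p hp := hp.imp (hP.sub_mem p) (hQ.sub_mem p)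
  center_notMem h := h.elim hP.center_notMem hQ.center_notMem
  existsUnique d hd hd0 := by
    rcases hd with hd | hd
    · exact existsUnique_union hP hQ hPQ hd hd0
    · rw [Set.union_comm]
      refine existsUnique_union hQ hP (fun e heT heS he => ?_) hd hd0
      obtain ⟨p, hpP, hpQ, hpe⟩ := hPQ e heS heT he
      exact ⟨p, hpQ, hpP, hpe⟩

end IsRadialSection

/-- The directions met when turning counterclockwise from `a` to `b`: a convex cone when the turn
is by less than a half-turn, that is when `0 < crossp a b`. -/
def sector (a b : Pt) : Set Pt := {d | 0 ≤ crossp a d ∧ 0 ≤ crossp d b}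

lemma crossp_smul_eq (a b d : Pt) :
    crossp a b • d = crossp d b • a + crossp a d • b := by
  ext <;> simp only [crossp, Prod.fst_add, Prod.snd_add, Prod.smul_fst, Prod.smul_snd, smul_eq_mul]
    <;> ring

lemma crossp_mul_crossp (a b c d : Pt) :
    crossp a b * crossp d c = crossp d b * crossp a c + crossp a d * crossp b c := by
  simp only [crossp]
  ring

lemma sector_union_sector {a b c : Pt} (hab : 0 < crossp a b) (hbc : 0 < crossp b c)
    (hac : 0 < crossp a c) : sector a b ∪ sector b c = sector a c := by
  refine Set.Subset.antisymm (Set.union_subset ?_ ?_) fun d hd => ?_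
  · rintro d ⟨had, hdb⟩
    refine ⟨had, nonneg_of_mul_nonneg_right ?_ hab⟩
    rw [crossp_mul_crossp]
    positivity
  · rintro d ⟨hbd, hdc⟩
    refine ⟨nonneg_of_mul_nonneg_left ?_ hbc, hdc⟩
    have := crossp_mul_crossp a b c d
    rw [← neg_crossp b d] at this
    nlinarith [mul_nonneg hab.le hdc, mul_nonneg hbd hac.le]
  · rcases le_total 0 (crossp d b) with h | h
    · exact .inl ⟨hd.1, h⟩
    · exact .inr ⟨by rwa [← neg_crossp, neg_nonneg], hd.2⟩

lemma exists_smul_of_mem_sectors {a b c d : Pt} (hab : 0 < crossp a b) (h : d ∈ sector a b)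
    (h' : d ∈ sector b c) : ∃ t : ℝ, 0 ≤ t ∧ d = t • b := by
  have hdb : crossp d b = 0 := le_antisymm (by rw [← neg_crossp]; exact neg_nonpos.2 h'.1) h.2
  refine ⟨crossp a d / crossp a b, div_nonneg h.1 hab.le, ?_⟩
  have hd := crossp_smul_eq a b d
  rw [hdb, zero_smul, zero_add] at hd
  rw [div_eq_inv_mul, mul_smul, ← hd, inv_smul_smul₀ hab.ne']

lemma sectors_cover {a b c : Pt} (hab : 0 < crossp a b) (hbc : 0 < crossp b c)
    (hca : 0 < crossp c a) : sector a b ∪ sector b c ∪ sector c a = Set.univ := by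
  refine Set.eq_univ_of_forall fun d => ?_
  have hsum : crossp b c * crossp a d + crossp c a * crossp b d + crossp a b * crossp c d = 0 := by
    simp only [crossp]
    ring
  simp only [sector, Set.mem_union, Set.mem_ofPred_eq, ← neg_crossp _ d, neg_nonneg]
  by_contra! h
  rcases lt_or_ge (crossp a d) 0 with ha | ha
  · have hc : crossp c d < 0 := not_le.1 fun hc => (h.2 hc).not_gt ha
    have hb : crossp b d < 0 := not_le.1 fun hb => (h.1.2 hb).not_gt hc
    nlinarith [mul_pos_of_neg_of_neg ha (neg_lt_zero.2 hbc)]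
  · have hb := h.1.1 ha
    have hc := h.1.2 hb.le
    nlinarith [mul_pos hca hb, mul_pos hab hc, mul_nonneg hbc.le ha]

lemma smul_mem_sector {a b d : Pt} (hd : d ∈ sector a b) {t : ℝ} (ht : 0 ≤ t) :
    t • d ∈ sector a b := by
  refine ⟨(mul_nonneg ht hd.1).trans_eq ?_, (mul_nonneg ht hd.2).trans_eq ?_⟩ <;>
    simp only [crossp, Prod.smul_fst, Prod.smul_snd, smul_eq_mul] <;> ring

lemma add_smul_mem_sector {a b : Pt} (hab : 0 ≤ crossp a b) {s t : ℝ} (hs : 0 ≤ s) (ht : 0 ≤ t) :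
    s • a + t • b ∈ sector a b := by
  constructor
  · rw [crossp_add_smul, crossp_self, mul_zero, zero_add]
    exact mul_nonneg ht hab
  · rw [← neg_crossp, crossp_add_smul, crossp_self, mul_zero, add_zero, ← mul_neg, neg_crossp]
    exact mul_nonneg hs hab

lemma exists_mem_segment_of_mem_sector {o a b d : Pt} (hab : 0 < crossp (a - o) (b - o))
    (hd : d ∈ sector (a - o) (b - o)) (hd0 : d ≠ 0) :
    ∃ p ∈ segment ℝ a b, ∃ t : ℝ, 0 ≤ t ∧ p = o + t • d := by
  have hcramer := crossp_smul_eq (a - o) (b - o) d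
  obtain ⟨hβ, hα⟩ := hd
  set α := crossp d (b - o)
  set β := crossp (a - o) d
  have hpos : 0 < α + β := by
    refine (add_nonneg hα hβ).lt_of_ne' fun h => ?_
    obtain ⟨hα0, hβ0⟩ := (add_eq_zero_iff_of_nonneg hα hβ).1 h
    rw [hα0, hβ0, zero_smul, zero_smul, add_zero] at hcramer
    exact (smul_ne_zero hab.ne' hd0) hcramer
  refine ⟨_, mem_segment_iff_div.2 ⟨α, β, hα, hβ, hpos, rfl⟩,
    crossp (a - o) (b - o) / (α + β), by positivity, ?_⟩
  have hsum : α / (α + β) + β / (α + β) = 1 := by rw [← add_div, div_self hpos.ne']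
  have hd : (crossp (a - o) (b - o) / (α + β)) • d =
      (α / (α + β)) • (a - o) + (β / (α + β)) • (b - o) := by
    rw [div_eq_inv_mul, mul_smul, hcramer]
    module
  linear_combination (norm := module) hsum • o - hd

lemma isRadialSection_segment {o a b : Pt} (hab : 0 < crossp (a - o) (b - o)) :
    IsRadialSection o (sector (a - o) (b - o)) (segment ℝ a b) := by
  have hline : ∀ p ∈ segment ℝ a b, ∀ t : ℝ, ∀ d : Pt, p = o + t • d →
      t * crossp d (b - a) = crossp (a - o) (b - o) := by
    rintro p ⟨s, t, -, -, hst, rfl⟩ r d hp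
    have h := congrArg (crossp · (b - a)) hp
    simp only [crossp, Prod.fst_add, Prod.snd_add, Prod.fst_sub, Prod.snd_sub, Prod.smul_fst,
      Prod.smul_snd, smul_eq_mul] at h ⊢
    linear_combination (a.1 * b.2 - a.2 * b.1) * hst - h
  refine ⟨fun d hd t ht => smul_mem_sector hd ht, ?_, fun ho => ?_, fun d hd hd0 => ?_⟩
  · rintro p ⟨s, t, hs, ht, hst, rfl⟩
    have hp : s • a + t • b - o = s • (a - o) + t • (b - o) := by
      linear_combination (norm := module) hst • o
    exact hp ▸ add_smul_mem_sector hab.le hs ht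
  · have := hline o ho 0 0 (by simp only [smul_zero, add_zero])
    rw [zero_mul] at this
    exact hab.ne this
  · refine existsUnique_of_exists_of_unique ?_ ?_
    · exact exists_mem_segment_of_mem_sector hab hd hd0
    · rintro p q ⟨hp, t, -, hpd⟩ ⟨hq, t', -, hqd⟩
      have h := hline p hp t d hpd
      have h' := hline q hq t' d hqd
      rw [hpd, hqd, mul_right_cancel₀ (right_ne_zero_of_mul (h.trans_ne hab.ne')) (h.trans h'.symm)]

/-- The polygonal line through the points of a list; empty for fewer than two points. -/
def polyline (L : List Pt) : Set Pt := ⋃ p ∈ L.zip L.tail, segment ℝ p.1 p.2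

lemma polyline_cons_cons (a b : Pt) (L : List Pt) :
    polyline (a :: b :: L) = segment ℝ a b ∪ polyline (b :: L) := by
  simp only [polyline, List.tail_cons, List.zip_cons_cons, List.mem_cons,
    Set.iUnion_iUnion_eq_or_left]

lemma polyline_pair (a b : Pt) : polyline [a, b] = segment ℝ a b := by
  rw [polyline_cons_cons]
  simp [polyline]

lemma polyline_append_cons (a b : Pt) (t M : List Pt) :
    polyline (a :: (t ++ b :: M)) = polyline (a :: (t ++ [b])) ∪ polyline (b :: M) := by
  induction t generalizing a with
  | nil => rw [List.nil_append, List.nil_append, polyline_cons_cons, polyline_pair]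
  | cons c t ih =>
    simp only [List.cons_append, polyline_cons_cons, ih, Set.union_assoc]

lemma mem_polyline {L : List Pt} (hL : 2 ≤ L.length) {p : Pt} (hp : p ∈ L) : p ∈ polyline L := by
  match L with
  | [a, b] =>
    rw [polyline_pair]
    rcases List.mem_pair.1 hp with rfl | rfl
    · exact left_mem_segment ℝ _ _
    · exact right_mem_segment ℝ _ _
  | a :: b :: c :: L =>
    rw [polyline_cons_cons]
    rcases List.mem_cons.1 hp with rfl | hp
    · exact .inl (left_mem_segment ℝ _ _)
    · exact .inr (mem_polyline (by simp) hp)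

lemma cyclePairs_cons (w : Pt) (L : List Pt) :
    cyclePairs (w :: L) = (w :: (L ++ [w])).zip (w :: (L ++ [w])).tail := by
  rw [cyclePairs, List.rotate_cons_succ, List.rotate_zero, List.tail_cons]
  have h := List.zip_append (l₁ := w :: L) (r₁ := [w]) (l₂ := L ++ [w]) (r₂ := []) (by simp)
  simpa only [List.zip_nil_right, List.append_nil, List.cons_append] using h.symm

lemma cycleBody_cons (w : Pt) (L : List Pt) :
    cycleBody (w :: L) = polyline (w :: (L ++ [w])) := by
  rw [cycleBody, cyclePairs_cons, polyline]

lemma isChain_iff_forall_mem_zip_tail {α : Type*} {r : α → α → Prop} {L : List α} :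
    L.IsChain r ↔ ∀ p ∈ L.zip L.tail, r p.1 p.2 := by
  induction L with
  | nil => simp
  | cons a L ih =>
    cases L with
    | nil => simp
    | cons b L => simp [List.isChain_cons_cons, ih]

lemma exists_eq_add_smul {E : Type*} [AddCommGroup E] [Module ℝ E] {o a d : E} {s : ℝ}
    (hs : 0 ≤ s) (hd : d = s • (a - o)) (hd0 : d ≠ 0) :
    ∃ t : ℝ, 0 ≤ t ∧ a = o + t • d := by
  refine ⟨s⁻¹, inv_nonneg.2 hs, ?_⟩
  rw [hd, inv_smul_smul₀ (fun h => hd0 (by rw [hd, h, zero_smul])), add_sub_cancel]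

lemma IsRadialSection.union_sector {o a b c : Pt} {P Q : Set Pt}
    (hP : IsRadialSection o (sector (a - o) (b - o)) P)
    (hQ : IsRadialSection o (sector (b - o) (c - o)) Q)
    (hab : 0 < crossp (a - o) (b - o)) (hbP : b ∈ P) (hbQ : b ∈ Q) :
    IsRadialSection o (sector (a - o) (b - o) ∪ sector (b - o) (c - o)) (P ∪ Q) :=
  hP.union hQ fun _ hd hd' hd0 =>
    let ⟨_, ht, h⟩ := exists_smul_of_mem_sectors hab hd hd'
    ⟨b, hbP, hbQ, exists_eq_add_smul ht h hd0⟩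

lemma isRadialSection_polyline {o a b : Pt} {t : List Pt}
    (h : (a :: (t ++ [b])).Pairwise fun p q => 0 < crossp (p - o) (q - o)) :
    IsRadialSection o (sector (a - o) (b - o)) (polyline (a :: (t ++ [b]))) := by
  induction t generalizing a with
  | nil =>
    rw [List.nil_append, polyline_pair]
    exact isRadialSection_segment ((List.pairwise_cons.1 h).1 b (List.mem_singleton_self b))
  | cons c t ih =>
    obtain ⟨ha, hc⟩ := List.pairwise_cons.1 h
    have hac := ha c (by simp)
    have hab := ha b (by simp)
    have hcb := (List.pairwise_cons.1 hc).1 b (by simp)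
    rw [List.cons_append, polyline_cons_cons, ← sector_union_sector hac hcb hab]
    refine (isRadialSection_segment hac).union_sector (ih hc) hac (right_mem_segment ℝ a c) ?_
    exact mem_polyline (by simp) List.mem_cons_self

lemma existsUnique_mem_cycleBody {o w a b : Pt} {t : List Pt}
    (h : (a :: (t ++ [b])).Pairwise fun p q => 0 < crossp (p - o) (q - o))
    (hbw : 0 < crossp (b - o) (w - o)) (hwa : 0 < crossp (w - o) (a - o)) {d : Pt} (hd : d ≠ 0) :
    ∃! p : Pt, p ∈ cycleBody (w :: a :: (t ++ [b])) ∧ ∃ t : ℝ, 0 ≤ t ∧ p = o + t • d := by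
  have hab : 0 < crossp (a - o) (b - o) := (List.pairwise_cons.1 h).1 b (by simp)
  have hmem : ∀ p ∈ a :: (t ++ [b]), p ∈ polyline (a :: (t ++ [b])) :=
    fun p hp => mem_polyline (by simp) hp
  have hbody : IsRadialSection o Set.univ (cycleBody (w :: a :: (t ++ [b]))) := by
    have hcycle : cycleBody (w :: a :: (t ++ [b])) =
        polyline (a :: (t ++ [b])) ∪ segment ℝ b w ∪ segment ℝ w a := by
      rw [cycleBody_cons, List.cons_append, polyline_cons_cons, List.append_assoc,
        List.singleton_append, polyline_append_cons, polyline_pair, Set.union_comm]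
    rw [hcycle, ← sectors_cover hab hbw hwa]
    refine ((isRadialSection_polyline h).union_sector (isRadialSection_segment hbw) hab
      (hmem b (by simp)) (left_mem_segment ℝ b w)).union (isRadialSection_segment hwa) ?_
    rintro d (hd | hd) hd' hd0
    · obtain ⟨s, hs, hds⟩ := exists_smul_of_mem_sectors hwa hd' hd
      exact ⟨a, .inl (hmem a List.mem_cons_self), right_mem_segment ℝ w a,
        exists_eq_add_smul hs hds hd0⟩
    · obtain ⟨s, hs, hds⟩ := exists_smul_of_mem_sectors hbw hd hd'
      exact ⟨w, .inr (right_mem_segment ℝ b w), left_mem_segment ℝ w a,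
        exists_eq_add_smul hs hds hd0⟩
  exact hbody.existsUnique d (Set.mem_univ d) hd

end StarCriterion

section Apex

variable {G G' : PSLG}

lemma IsPathIn.mem_V {L : List Pt} (hL : IsPathIn G L) {p : Pt} (hp : p ∈ L) : p ∈ G.V := by
  obtain ⟨hlen, hchain⟩ := hL
  match L with
  | [a, b] =>
    obtain ⟨ha, hb, -⟩ := G.valid.1 a b (List.isChain_pair.1 hchain)
    rcases List.mem_pair.1 hp with rfl | rfl
    · exact ha
    · exact hb
  | a :: b :: c :: L =>
    obtain ⟨hab, hchain⟩ := List.isChain_cons_cons.1 hchain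
    rcases List.mem_cons.1 hp with rfl | hp
    · exact (G.valid.1 _ _ hab).1
    · exact IsPathIn.mem_V ⟨by simp, hchain⟩ hp

lemma IsXMonotonePath.pairwise_fst_lt {L : List Pt} (hL : IsXMonotonePath G L) :
    L.Pairwise fun p q => p.1 < q.1 :=
  List.pairwise_map.1 (List.isChain_map Prod.fst |>.2 hL.2).pairwise

lemma IsXMonotonePath.nodup {L : List Pt} (hL : IsXMonotonePath G L) : L.Nodup :=
  hL.pairwise_fst_lt.imp fun h e => h.ne (congrArg Prod.fst e)

/-- The x-monotone paths of `G` from `a` to `b`. -/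
def xMonotonePaths (G : PSLG) (a b : Pt) : Set (List Pt) :=
  {L | IsXMonotonePath G L ∧ L.head? = some a ∧ L.getLast? = some b}

lemma exists_eq_of_mem_xMonotonePaths {a b : Pt} {L : List Pt} (hL : L ∈ xMonotonePaths G a b) :
    ∃ t, L = a :: (t ++ [b]) := by
  obtain ⟨⟨⟨hlen, -⟩, -⟩, ha, hb⟩ := hL
  obtain ⟨M, rfl⟩ := List.head?_eq_some_iff.1 ha
  obtain ⟨c, M, rfl⟩ := List.exists_cons_of_length_pos (Nat.lt_of_succ_lt_succ hlen)
  rw [List.getLast?_cons_cons] at hb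
  obtain ⟨t, ht⟩ := List.getLast?_eq_some_iff.1 hb
  exact ⟨t, by rw [ht]⟩

lemma isStarShapedPolygon_cons {o w a b : Pt} {L : List Pt} (hE : G.E ⊆ G'.E)
    (hbw : s(b, w) ∈ G'.E) (hwa : s(w, a) ∈ G'.E) (hw : w ∉ G.V)
    (hturn : ∀ p ∈ G.V, ∀ q ∈ G.V, p.1 < q.1 → 0 < crossp (p - o) (q - o))
    (hturn_bw : 0 < crossp (b - o) (w - o)) (hturn_wa : 0 < crossp (w - o) (a - o))
    (hL : L ∈ xMonotonePaths G a b) : IsStarShapedPolygon G' (w :: L) := by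
  obtain ⟨t, rfl⟩ := exists_eq_of_mem_xMonotonePaths hL
  have hmem : ∀ p ∈ a :: (t ++ [b]), p ∈ G.V := fun p => hL.1.1.mem_V
  refine ⟨⟨by simp, List.nodup_cons.2 ⟨fun h => hw (hmem w h), hL.1.nodup⟩, ?_⟩, o, fun d hd => ?_⟩
  · have hpath : (a :: (t ++ [b])).IsChain fun p q => s(p, q) ∈ G'.E :=
      hL.1.1.2.imp fun p q h => hE h
    rw [cyclePairs_cons]
    refine (isChain_iff_forall_mem_zip_tail (r := fun p q => s(p, q) ∈ G'.E)).1
      (List.isChain_cons_cons.2 ⟨hwa, List.isChain_append.2 ⟨hpath, .singleton w, ?_⟩⟩)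
    rw [hL.2.2]
    simpa using hbw
  · exact existsUnique_mem_cycleBody (hL.1.pairwise_fst_lt.imp_of_mem fun hp hq =>
      hturn _ (hmem _ hp) _ (hmem _ hq)) hturn_bw hturn_wa hd

lemma exists_mem_cycleEdgeSet_iff {L : List Pt} {v : Pt} :
    (∃ e ∈ cycleEdgeSet L, v ∈ e) ↔ v ∈ L := by
  simp only [cycleEdgeSet, List.mem_toFinset, List.mem_map]
  constructor
  · rintro ⟨e, ⟨⟨a, b⟩, hp, rfl⟩, hv⟩
    obtain ⟨ha, hb⟩ := List.of_mem_zip hp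
    rcases Sym2.mem_iff.1 hv with rfl | rfl
    · exact ha
    · exact List.mem_rotate.1 hb
  · intro hv
    rw [← List.map_fst_zip (l₁ := L) (l₂ := L.rotate 1) (by simp)] at hv
    obtain ⟨p, hp, rfl⟩ := List.mem_map.1 hv
    exact ⟨_, ⟨p, hp, rfl⟩, Sym2.mem_mk_left _ _⟩

lemma injOn_cycleEdgeSet_cons {w : Pt} (hw : w ∉ G.V) :
    Set.InjOn (fun L => cycleEdgeSet (w :: L)) {L | IsXMonotonePath G L} := by
  intro L hL M hM h
  have hmem : ∀ v, v ∈ w :: L ↔ v ∈ w :: M := fun v => by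
    rw [← exists_mem_cycleEdgeSet_iff, ← exists_mem_cycleEdgeSet_iff]
    exact iff_of_eq (congrArg (fun E : Finset (Sym2 Pt) => ∃ e ∈ E, v ∈ e) h)
  have hcons : (w :: L).Perm (w :: M) :=
    (List.perm_ext_iff_of_nodup (List.nodup_cons.2 ⟨fun h => hw (hL.1.mem_V h), hL.nodup⟩)
      (List.nodup_cons.2 ⟨fun h => hw (hM.1.mem_V h), hM.nodup⟩)).2 hmem
  exact (hcons.cons_inv).eq_of_pairwise (fun p q _ _ hpq hqp => absurd hpq hqp.asymm)
    hL.pairwise_fst_lt hM.pairwise_fst_lt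

lemma finite_starShapedPolygons (G : PSLG) :
    {E : Finset (Sym2 Pt) | ∃ L, IsStarShapedPolygon G L ∧ E = cycleEdgeSet L}.Finite := by
  refine G.E.powerset.finite_toSet.subset ?_
  rintro E ⟨L, hL, rfl⟩
  rw [Finset.mem_coe, Finset.mem_powerset]
  intro e he
  obtain ⟨p, hp, rfl⟩ := List.mem_map.1 (List.mem_toFinset.1 he)
  exact hL.1.2.2 p hp

lemma encard_le_starCount_of_mapsTo {P : Set (List Pt)} {w : Pt} (hw : w ∉ G.V)
    (hP : P ⊆ {L | IsXMonotonePath G L}) (hstar : ∀ L ∈ P, IsStarShapedPolygon G' (w :: L)) :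
    P.encard ≤ (starCount G' : ℕ∞) := by
  rw [starCount, (finite_starShapedPolygons G').cast_ncard_eq]
  exact Set.encard_le_encard_of_injOn (fun L hL => ⟨_, hstar L hL, rfl⟩)
    ((injOn_cycleEdgeSet_cons hw).mono hP)

lemma eventually_crossp_sub_pos (x : ℝ) {p q : Pt} (hpq : p.1 < q.1) :
    ∀ᶠ h : ℝ in Filter.atTop, 0 < crossp (p - (x, h)) (q - (x, h)) := by
  filter_upwards [Filter.eventually_gt_atTop
    ((p.2 * (q.1 - x) - q.2 * (p.1 - x)) / (q.1 - p.1))] with h hh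
  rw [div_lt_iff₀ (sub_pos.2 hpq)] at hh
  simp only [crossp, Prod.fst_sub, Prod.snd_sub]
  linarith

lemma eventually_forall_crossp_sub_pos (V : Finset Pt) (x : ℝ) :
    ∀ᶠ h : ℝ in Filter.atTop, ∀ p ∈ V, ∀ q ∈ V, p.1 < q.1 →
      0 < crossp (p - (x, h)) (q - (x, h)) := by
  refine (Filter.eventually_all_finset V).2 fun p _ =>
    (Filter.eventually_all_finset V).2 fun q _ => ?_
  by_cases hpq : p.1 < q.1
  · exact (eventually_crossp_sub_pos x hpq).mono fun _ h _ => h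
  · exact .of_forall fun _ h => absurd h hpq

theorem exists_encard_xMonotonePaths_le_starCount {a b : Pt} (ha : a ∈ G.V) (hb : b ∈ G.V)
    (hab : a ≠ b) (hleft : ∀ v ∈ G.V, v ≠ a → a.1 < v.1) (hright : ∀ v ∈ G.V, v ≠ b → v.1 < b.1) :
    ∃ G' : PSLG, G'.V.card = G.V.card + 1 ∧
      (xMonotonePaths G a b).encard ≤ (starCount G' : ℕ∞) := by
  obtain ⟨x, hax, hxb⟩ := exists_between (hright a ha hab)
  have hfar := eventually_forall_crossp_sub_pos G.V x
  obtain ⟨h, ho, hw⟩ := (hfar.and ((Filter.tendsto_atTop_add_const_right _ 1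
    Filter.tendsto_id).eventually hfar)).exists
  simp only [id] at hw
  set o : Pt := (x, h)
  set w : Pt := (x, h + 1)
  have hwa : 0 < crossp (w - o) (a - o) := by simp [crossp, o, w, hax]
  have hbw : 0 < crossp (b - o) (w - o) := by simp [crossp, o, w, hxb]
  have hwV : w ∉ G.V := fun h => by
    simpa [crossp] using hw a ha w h hax
  refine ⟨⟨_, _, G.valid.insert_tangents ha hb hwV
    (fun v hv hva => hw a ha v hv (hleft v hv hva))
    (fun v hv hvb => hw v hv b hb (hright v hv hvb))⟩, Finset.card_insert_of_notMem hwV, ?_⟩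
  refine encard_le_starCount_of_mapsTo hwV (fun L hL => hL.1) fun L hL =>
    isStarShapedPolygon_cons ?_ (by simp) (by simp) hwV ho hbw hwa hL
  exact (Finset.subset_insert _ _).trans (Finset.subset_insert _ _)

end Apex

section Zigzag

/-- The points of a zigzag: alternately on the parabola `y = 1 + x ^ 2` and on its mirror image
`y = -(1 + x ^ 2)`, numbered from right to left so that a path built by prepending vertices of
increasing number runs from left to right. -/
def zigzag (i : ℕ) : Pt := (-i, (-1) ^ i * (1 + (i : ℝ) ^ 2))

/-- The arcs from `i` to `j > i`: steps of length one and two, and steps of length four and eight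
that shortcut dyadic blocks, aligned differently on the even and on the odd numbers so that
the blocks of the two parities interleave. -/
def Arc (i j : ℕ) : Prop :=
  j = i + 1 ∨ j = i + 2 ∨ (j = i + 4 ∧ (i % 4 = 0 ∨ i % 4 = 3)) ∨
    (j = i + 8 ∧ (i % 8 = 0 ∨ i % 8 = 3))

instance : DecidableRel Arc := fun i j => by unfold Arc; infer_instance

lemma Arc.lt {i j : ℕ} (h : Arc i j) : i < j := by
  unfold Arc at h
  omega

lemma zigzag_fst_lt_iff {i j : ℕ} : (zigzag i).1 < (zigzag j).1 ↔ j < i := by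
  simp only [zigzag, neg_lt_neg_iff, Nat.cast_lt]

lemma zigzag_injective : Function.Injective zigzag := fun i j h => by
  simpa only [zigzag, neg_inj, Nat.cast_inj] using congrArg Prod.fst h

lemma crossp_vertical_zigzag (i : ℕ) : crossp (0, 1) (zigzag i) = i := by
  simp only [crossp, zigzag]
  ring

lemma neg_one_pow_mul_zigzag_snd_le (i m : ℕ) : (-1) ^ i * (zigzag m).2 ≤ 1 + (m : ℝ) ^ 2 := by
  refine (le_abs_self _).trans_eq ?_
  rw [zigzag, abs_mul, abs_mul, abs_neg_one_pow, abs_neg_one_pow, one_mul, one_mul,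
    abs_of_nonneg (by positivity)]

lemma neg_one_pow_mul_zigzag_snd {i m : ℕ} (h : Even (i + m)) :
    (-1) ^ i * (zigzag m).2 = 1 + (m : ℝ) ^ 2 := by
  rw [zigzag, ← mul_assoc, ← pow_add, h.neg_one_pow, one_mul]

lemma neg_one_pow_mul_zigzag_snd_of_odd {i m : ℕ} (h : Odd (i + m)) :
    (-1) ^ i * (zigzag m).2 = -(1 + (m : ℝ) ^ 2) := by
  rw [zigzag, ← mul_assoc, ← pow_add, h.neg_one_pow, neg_one_mul]

lemma disjoint_zigzag_of_le {i j k l : ℕ} (hij : i ≤ j) (hjk : j ≤ k) (hkl : k ≤ l)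
    (hlt : i < j ∨ k < l) :
    Disjoint (openSegment ℝ (zigzag i) (zigzag j)) (openSegment ℝ (zigzag k) (zigzag l)) := by
  refine disjoint_openSegment_of_crossp (u := (0, 1)) (r := j) ?_ ?_ ?_ ?_ ?_ <;>
    simp only [crossp_vertical_zigzag, Nat.cast_le, Nat.cast_lt] <;> omega

lemma crossp_zigzag (i m : ℕ) (s : ℝ) :
    crossp ((-1) ^ i, s) (zigzag m) = (-1) ^ i * (zigzag m).2 + s * m := by
  simp only [crossp, zigzag]
  ring

lemma disjoint_zigzag_of_parity {i j k l : ℕ} (hij : Even (i + j)) (hkl : Even (k + l))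
    (hik : Odd (i + k)) :
    Disjoint (openSegment ℝ (zigzag i) (zigzag j)) (openSegment ℝ (zigzag k) (zigzag l)) := by
  have hneg : ∀ m, Odd (i + m) → crossp ((-1) ^ i, 0) (zigzag m) < 0 := fun m hm => by
    rw [crossp_zigzag, neg_one_pow_mul_zigzag_snd_of_odd hm, zero_mul, add_zero, neg_lt_zero]
    positivity
  have hpos : ∀ m, Even (i + m) → 0 ≤ crossp ((-1) ^ i, 0) (zigzag m) := fun m hm => by
    rw [crossp_zigzag, neg_one_pow_mul_zigzag_snd hm, zero_mul, add_zero]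
    positivity
  have hil : Odd (i + l) := by
    rw [Nat.odd_iff, Nat.even_iff] at *
    omega
  exact (disjoint_openSegment_of_crossp (hneg k hik).le (hneg l hil).le
    (hpos i (Even.add_self i)) (hpos j hij) (.inl (hneg k hik))).symm

lemma disjoint_zigzag_chord {i j k l : ℕ} (hij : Even (i + j)) (hik : i ≤ k) (hkl : k ≤ l)
    (hlj : l ≤ j) (hlt : i < k ∧ k < j ∨ i < l ∧ l < j) :
    Disjoint (openSegment ℝ (zigzag k) (zigzag l)) (openSegment ℝ (zigzag i) (zigzag j)) := by
  -- On the parabola itself the functional has the value `1 + m ^ 2 - (i + j) * m`.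
  have hbound : ∀ m, crossp ((-1) ^ i, -(i + j : ℝ)) (zigzag m) ≤
      1 - i * j + ((m : ℝ) - i) * (m - j) := fun m => by
    rw [crossp_zigzag]
    linarith [neg_one_pow_mul_zigzag_snd_le i m]
  have hle : ∀ m, i ≤ m → m ≤ j →
      crossp ((-1) ^ i, -(i + j : ℝ)) (zigzag m) ≤ 1 - i * j := fun m him hmj => by
    refine (hbound m).trans (add_le_of_nonpos_right ?_)
    exact mul_nonpos_of_nonneg_of_nonpos (by simpa) (by simpa)
  have hlt' : ∀ m, i < m ∧ m < j →
      crossp ((-1) ^ i, -(i + j : ℝ)) (zigzag m) < 1 - i * j := fun m hm => by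
    refine (hbound m).trans_lt (add_lt_of_neg_right _ ?_)
    exact mul_neg_of_pos_of_neg (by simpa using hm.1) (by simpa using hm.2)
  have hends : ∀ m, Even (i + m) → (m : ℝ) = i ∨ (m : ℝ) = j →
      1 - i * j ≤ crossp ((-1) ^ i, -(i + j : ℝ)) (zigzag m) := fun m hm h => by
    rw [crossp_zigzag, neg_one_pow_mul_zigzag_snd hm]
    rcases h with h | h <;> rw [h] <;> linarith
  exact disjoint_openSegment_of_crossp (hle k hik (hkl.trans hlj)) (hle l (hik.trans hkl) hlj)
    (hends i (Even.add_self i) (.inl rfl)) (hends j hij (.inr rfl))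
    (hlt.elim (fun h => .inl (hlt' k h)) fun h => .inr (.inl (hlt' l h)))

lemma disjoint_zigzag_of_arc {i j k l : ℕ} (hij : Arc i j) (hkl : Arc k l) (hne : (i, j) ≠ (k, l)) :
    Disjoint (openSegment ℝ (zigzag i) (zigzag j)) (openSegment ℝ (zigzag k) (zigzag l)) := by
  have hij' := hij.lt
  have hkl' := hkl.lt
  by_cases hjk : j ≤ k
  · exact disjoint_zigzag_of_le hij'.le hjk hkl'.le (.inl hij')
  by_cases hli : l ≤ i
  · exact (disjoint_zigzag_of_le hkl'.le hli hij'.le (.inl hkl')).symm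
  by_cases hpar : Even (i + j) ∧ Even (k + l) ∧ Odd (i + k)
  · exact disjoint_zigzag_of_parity hpar.1 hpar.2.1 hpar.2.2
  rw [Ne, Prod.mk.injEq] at hne
  have hnested : Even (i + j) ∧ i ≤ k ∧ l ≤ j ∨ Even (k + l) ∧ k ≤ i ∧ j ≤ l := by
    simp only [Arc, Nat.even_iff, Nat.odd_iff] at *
    omega
  rcases hnested with ⟨heven, hik, hlj⟩ | ⟨heven, hki, hjl⟩
  · exact (disjoint_zigzag_chord heven hik hkl'.le hlj (by omega)).symm
  · exact disjoint_zigzag_chord heven hki hij'.le hjl (by omega)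

lemma zigzag_notMem_openSegment {i j : ℕ} (hij : Arc i j) (m : ℕ) :
    zigzag m ∉ openSegment ℝ (zigzag i) (zigzag j) := by
  have hdisj : Disjoint (openSegment ℝ (zigzag m) (zigzag m))
      (openSegment ℝ (zigzag i) (zigzag j)) := by
    rcases le_or_gt m i with hmi | him
    · exact disjoint_zigzag_of_le le_rfl hmi hij.lt.le (.inr hij.lt)
    rcases le_or_gt j m with hjm | hmj
    · exact (disjoint_zigzag_of_le hij.lt.le hjm le_rfl (.inl hij.lt)).symm
    have heven : Even (i + j) := by
      rw [Nat.even_iff]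
      unfold Arc at hij
      omega
    exact disjoint_zigzag_chord heven him.le le_rfl hmj.le (.inl ⟨him, hmj⟩)
  rwa [openSegment_same, Set.disjoint_singleton_left] at hdisj

lemma validEdges_image {ι : Type*} {p : ι → Pt} (hp : Function.Injective p) {S : Finset ι}
    {A : Finset (ι × ι)} (hS : ∀ e ∈ A, e.1 ∈ S ∧ e.2 ∈ S ∧ e.1 ≠ e.2)
    (hV : ∀ e ∈ A, ∀ m ∈ S, p m ∉ openSegment ℝ (p e.1) (p e.2))
    (hE : ∀ e ∈ A, ∀ f ∈ A, e ≠ f →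
      Disjoint (openSegment ℝ (p e.1) (p e.2)) (openSegment ℝ (p f.1) (p f.2))) :
    ValidEdges (S.image p) (A.image fun e => s(p e.1, p e.2)) := by
  refine ⟨fun a b hab => ?_, fun a b hab v hv => ?_, fun a b c d hab hcd hne => ?_⟩
  · obtain ⟨e, he, hab⟩ := Finset.mem_image.1 hab
    obtain ⟨h₁, h₂, hne⟩ := hS e he
    rcases Sym2.eq_iff.1 hab with ⟨rfl, rfl⟩ | ⟨rfl, rfl⟩
    · exact ⟨Finset.mem_image_of_mem p h₁, Finset.mem_image_of_mem p h₂, hp.ne hne⟩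
    · exact ⟨Finset.mem_image_of_mem p h₂, Finset.mem_image_of_mem p h₁, hp.ne hne.symm⟩
  · obtain ⟨e, he, hab⟩ := Finset.mem_image.1 hab
    obtain ⟨m, hm, rfl⟩ := Finset.mem_image.1 hv
    exact openSegment_eq_of_sym2_eq hab ▸ hV e he m hm
  · obtain ⟨e, he, hab⟩ := Finset.mem_image.1 hab
    obtain ⟨f, hf, hcd⟩ := Finset.mem_image.1 hcd
    rw [← openSegment_eq_of_sym2_eq hab, ← openSegment_eq_of_sym2_eq hcd]
    refine (hE e he f hf fun hef => hne ?_).inter_eq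
    rw [← hab, ← hcd, hef]

/-- The plane graph drawn by the arcs between the zigzag points numbered `0, …, N`. -/
def zigzagGraph (N : ℕ) : PSLG where
  V := (Finset.range (N + 1)).image zigzag
  E := {e ∈ Finset.range (N + 1) ×ˢ Finset.range (N + 1) | Arc e.1 e.2}.image
    fun e => s(zigzag e.1, zigzag e.2)
  valid := by
    refine validEdges_image zigzag_injective ?_ ?_ ?_ <;>
      simp only [Finset.mem_filter, Finset.mem_product]
    · exact fun e he => ⟨he.1.1, he.1.2, he.2.lt.ne⟩
    · exact fun e he m _ => zigzag_notMem_openSegment he.2 m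
    · exact fun e he f hf hne => disjoint_zigzag_of_arc he.2 hf.2 hne

lemma card_zigzagGraph_V (N : ℕ) : (zigzagGraph N).V.card = N + 1 := by
  rw [zigzagGraph, Finset.card_image_of_injective _ zigzag_injective, Finset.card_range]

lemma zigzag_mem_V {N i : ℕ} (h : i ≤ N) : zigzag i ∈ (zigzagGraph N).V :=
  Finset.mem_image_of_mem _ (Finset.mem_range_succ_iff.2 h)

lemma Arc.mk_mem_E {N i j : ℕ} (h : Arc i j) (hj : j ≤ N) :
    s(zigzag j, zigzag i) ∈ (zigzagGraph N).E := by
  rw [Sym2.eq_swap]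
  exact Finset.mem_image_of_mem (fun e : ℕ × ℕ => s(zigzag e.1, zigzag e.2)) (a := (i, j)) <| by
    simp [h, hj, h.lt.le.trans hj]

end Zigzag

section Descents

variable (r : ℕ → ℕ → Prop) [DecidableRel r]

/-- The descents from `i` to `0` along `r`: the lists `t` for which `i :: t` decreases to `0`, each
entry being `r`-related to its predecessor in the list. -/
def descents : ℕ → Finset (List ℕ)
  | 0 => {[]}
  | i + 1 => Finset.univ.biUnion fun j : Fin (i + 1) =>
      if r j (i + 1) then (descents j).image (List.cons j) else ∅

variable {r}

lemma cons_mem_descents {i j : ℕ} {t : List ℕ} (hij : i < j) (hr : r i j) (ht : t ∈ descents r i) :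
    i :: t ∈ descents r j := by
  obtain _ | j := j
  · exact absurd hij (Nat.not_lt_zero i)
  · rw [descents, Finset.mem_biUnion]
    refine ⟨⟨i, hij⟩, Finset.mem_univ _, ?_⟩
    rw [if_pos hr]
    exact Finset.mem_image_of_mem _ ht

lemma exists_eq_cons_of_mem_descents_succ {j : ℕ} {t : List ℕ} (ht : t ∈ descents r (j + 1)) :
    ∃ i ≤ j, r i (j + 1) ∧ ∃ u ∈ descents r i, t = i :: u := by
  rw [descents, Finset.mem_biUnion] at ht
  obtain ⟨i, -, ht⟩ := ht
  split_ifs at ht with hr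
  · obtain ⟨u, hu, rfl⟩ := Finset.mem_image.1 ht
    exact ⟨i, Nat.lt_succ_iff.1 i.2, hr, u, hu, rfl⟩
  · exact absurd ht (Finset.notMem_empty t)

lemma isChain_of_mem_descents {N i : ℕ} (hi : i ≤ N) {t : List ℕ} (ht : t ∈ descents r i) :
    (i :: t).IsChain (fun a b => b < a ∧ a ≤ N ∧ r b a) ∧ (i :: t).getLast? = some 0 := by
  induction t generalizing i with
  | nil =>
    obtain _ | i := i
    · exact ⟨.singleton 0, rfl⟩
    · obtain ⟨j, -, -, u, -, h⟩ := exists_eq_cons_of_mem_descents_succ ht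
      exact absurd h (List.cons_ne_nil j u).symm
  | cons k t ih =>
    obtain _ | i := i
    · rw [descents] at ht
      exact absurd (Finset.mem_singleton.1 ht) (List.cons_ne_nil k t)
    · obtain ⟨j, hji, hr, u, hu, h⟩ := exists_eq_cons_of_mem_descents_succ ht
      obtain ⟨rfl, rfl⟩ := List.cons.inj h
      obtain ⟨hchain, hlast⟩ := ih (hji.trans (Nat.le_of_succ_le hi)) hu
      exact ⟨.cons_cons ⟨Nat.lt_succ_iff.2 hji, hi, hr⟩ hchain, hlast⟩

lemma sum_card_descents_le {i : ℕ} {s : Finset ℕ} (hs : ∀ j ∈ s, j < i ∧ r j i) :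
    ∑ j ∈ s, (descents r j).card ≤ (descents r i).card := by
  have hcard : ∀ j ∈ s, ((descents r j).image (List.cons j)).card = (descents r j).card :=
    fun j _ => Finset.card_image_of_injective _ List.cons_injective
  rw [← Finset.sum_congr rfl hcard, ← Finset.card_biUnion]
  · refine Finset.card_le_card (Finset.biUnion_subset.2 fun j hj => Finset.image_subset_iff.2 ?_)
    exact fun t ht => cons_mem_descents (hs j hj).1 (hs j hj).2 ht
  · intro j _ k _ hjk
    refine Finset.disjoint_left.2 fun t ht ht' => hjk ?_
    obtain ⟨u, -, rfl⟩ := Finset.mem_image.1 ht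
    obtain ⟨v, -, hv⟩ := Finset.mem_image.1 ht'
    exact (List.cons.inj hv).1.symm

end Descents

section Growth

lemma sum_card_descents_arc_le {i : ℕ} {s : Finset ℕ} (hs : ∀ j ∈ s, Arc j i) :
    ∑ j ∈ s, (descents Arc j).card ≤ (descents Arc i).card :=
  sum_card_descents_le fun j hj => ⟨(hs j hj).lt, hs j hj⟩

lemma card_descents_add_two (i : ℕ) :
    (descents Arc (i + 1)).card + (descents Arc i).card ≤ (descents Arc (i + 2)).card := by
  have := sum_card_descents_arc_le (i := i + 2) (s := {i + 1, i}) (by simp [Arc])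
  rwa [Finset.sum_pair (by simp)] at this

lemma card_descents_add_four {i : ℕ} (hi : i % 4 = 0 ∨ i % 4 = 3) :
    (descents Arc (i + 3)).card + (descents Arc (i + 2)).card + (descents Arc i).card ≤
      (descents Arc (i + 4)).card := by
  have := sum_card_descents_arc_le (i := i + 4) (s := {i + 3, i + 2, i}) (by simp [Arc, hi])
  simpa [add_assoc] using this

lemma card_descents_add_eight {i : ℕ} (hi : i % 8 = 0 ∨ i % 8 = 3) :
    (descents Arc (i + 7)).card + (descents Arc (i + 6)).card + (descents Arc (i + 4)).card +
      (descents Arc i).card ≤ (descents Arc (i + 8)).card := by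
  have := sum_card_descents_arc_le (i := i + 8) (s := {i + 7, i + 6, i + 4, i})
    (by simp [Arc, hi]; omega)
  simpa [add_assoc] using this

lemma card_descents_arc_pos (i : ℕ) : 1 ≤ (descents Arc i).card := by
  induction i with
  | zero => simp [descents]
  | succ i ih =>
    have := sum_card_descents_arc_le (i := i + 1) (s := {i}) (by simp [Arc])
    rw [Finset.sum_singleton] at this
    exact ih.trans this

-- The coefficients are a rounded Perron eigenvector of the period-eight transfer matrix of the
-- recursion, whose Perron eigenvalue slightly exceeds `69.86`, itself slightly more than
-- `1.7003 ^ 8`.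
lemma mul_pow_le_of_recursion {n : ℕ → ℝ} (h₁ : ∀ i, 1 ≤ n i)
    (h₂ : ∀ i, n (i + 1) + n i ≤ n (i + 2))
    (h₄ : ∀ i, i % 4 = 0 ∨ i % 4 = 3 → n (i + 3) + n (i + 2) + n i ≤ n (i + 4))
    (h₈ : ∀ i, i % 8 = 0 ∨ i % 8 = 3 → n (i + 7) + n (i + 6) + n (i + 4) + n i ≤ n (i + 8))
    (k : ℕ) :
    132 * 69.86 ^ k ≤ 5172 * n (8 * k) ∧ 206 * 69.86 ^ k ≤ 5172 * n (8 * k + 1) ∧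
    338 * 69.86 ^ k ≤ 5172 * n (8 * k + 2) ∧ 627 * 69.86 ^ k ≤ 5172 * n (8 * k + 3) ∧
    1097 * 69.86 ^ k ≤ 5172 * n (8 * k + 4) ∧ 1724 * 69.86 ^ k ≤ 5172 * n (8 * k + 5) ∧
    2821 * 69.86 ^ k ≤ 5172 * n (8 * k + 6) ∧ 5172 * 69.86 ^ k ≤ 5172 * n (8 * k + 7) := by
  induction k with
  | zero =>
    refine ⟨?_, ?_, ?_, ?_, ?_, ?_, ?_, ?_⟩ <;>
      linarith [h₁ 0, h₁ 1, h₁ 2, h₁ 3, h₁ 4, h₁ 5, h₁ 6, h₁ 7]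
  | succ k ih =>
    obtain ⟨w₀, -, -, w₃, w₄, -, w₆, w₇⟩ := ih
    have hq : (0 : ℝ) < 69.86 ^ k := by positivity
    have r₀ := h₈ (8 * k) (by omega)
    have r₁ := h₂ (8 * k + 7)
    have r₂ := h₂ (8 * k + 8)
    have r₃ := h₈ (8 * k + 3) (by omega)
    have r₄ := h₄ (8 * k + 8) (by omega)
    have r₅ := h₂ (8 * k + 11)
    have r₆ := h₂ (8 * k + 12)
    have r₇ := h₄ (8 * k + 11) (by omega)
    simp only [mul_add, mul_one, add_assoc, Nat.reduceAdd, pow_succ] at *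
    refine ⟨?_, ?_, ?_, ?_, ?_, ?_, ?_, ?_⟩ <;> linarith

lemma pow_le_card_descents (k : ℕ) :
    132 * 69.86 ^ k ≤ 5172 * ((descents Arc (8 * k)).card : ℝ) :=
  (mul_pow_le_of_recursion (n := fun i => ((descents Arc i).card : ℝ))
    (fun i => mod_cast card_descents_arc_pos i) (fun i => mod_cast card_descents_add_two i)
    (fun _ hi => mod_cast card_descents_add_four hi)
    (fun _ hi => mod_cast card_descents_add_eight hi) k).1

end Growth

section StarCount

lemma map_zigzag_mem_xMonotonePaths {N : ℕ} (hN : N ≠ 0) {t : List ℕ} (ht : t ∈ descents Arc N) :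
    (N :: t).map zigzag ∈ xMonotonePaths (zigzagGraph N) (zigzag N) (zigzag 0) := by
  obtain ⟨hchain, hlast⟩ := isChain_of_mem_descents le_rfl ht
  have hlen : 2 ≤ (N :: t).length := by
    obtain _ | ⟨i, t⟩ := t
    · exact absurd (Option.some.inj hlast) hN
    · simp
  refine ⟨⟨⟨by rwa [List.length_map], ?_⟩, ?_⟩, rfl, by rw [List.getLast?_map, hlast]; rfl⟩
  · exact (List.isChain_map zigzag).2 (hchain.imp fun i j h => h.2.2.mk_mem_E h.2.1)
  · exact (List.isChain_map zigzag).2 (hchain.imp fun i j h => zigzag_fst_lt_iff.2 h.1)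

lemma card_descents_le_encard_xMonotonePaths {N : ℕ} (hN : N ≠ 0) :
    ((descents Arc N).card : ℕ∞) ≤
      (xMonotonePaths (zigzagGraph N) (zigzag N) (zigzag 0)).encard := by
  rw [← Set.encard_coe_eq_coe_finsetCard]
  exact Set.encard_le_encard_of_injOn (fun t ht => map_zigzag_mem_xMonotonePaths hN ht)
    ((zigzag_injective.list_map.comp List.cons_injective).injOn)

lemma exists_card_descents_le_starCount {N : ℕ} (hN : N ≠ 0) :
    ∃ G : PSLG, G.V.card = N + 2 ∧ (descents Arc N).card ≤ starCount G := by
  have hfst : ∀ i j, i ≤ j → zigzag i ≠ zigzag j → (zigzag j).1 < (zigzag i).1 := fun i j hij hne =>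
    zigzag_fst_lt_iff.2 (hij.lt_of_ne fun h => hne (congrArg zigzag h))
  obtain ⟨G, hcard, hcount⟩ := exists_encard_xMonotonePaths_le_starCount
    (zigzag_mem_V le_rfl) (zigzag_mem_V (Nat.zero_le N)) (zigzag_injective.ne hN)
    (Finset.forall_mem_image.2 fun i hi hne => hfst i N (Finset.mem_range_succ_iff.1 hi) hne)
    (Finset.forall_mem_image.2 fun i _ hne => hfst 0 i (Nat.zero_le i) hne.symm)
  exact ⟨G, by rw [hcard, card_zigzagGraph_V],
    by exact_mod_cast (card_descents_le_encard_xMonotonePaths hN).trans hcount⟩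

end StarCount

/-- for infinitely many `n` there is a PSLG on `n` points containing at
least `c·1.7003ⁿ` star-shaped polygons, for an absolute constant `c > 0`. -/
theorem starShaped_lower_bound :
    ∃ c : ℝ, 0 < c ∧ ∀ N : ℕ, ∃ n : ℕ, N ≤ n ∧
      ∃ G : PSLG, G.V.card = n ∧
        c * (1.7003 : ℝ) ^ n ≤ (starCount G : ℝ) := by
  refine ⟨132 / (5172 * 1.7003 ^ 2), by positivity, fun N => ⟨8 * (N + 1) + 2, by omega, ?_⟩⟩
  obtain ⟨G, hcard, hcount⟩ := exists_card_descents_le_starCount (N := 8 * (N + 1)) (by omega)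
  refine ⟨G, hcard, ?_⟩
  calc 132 / (5172 * 1.7003 ^ 2) * (1.7003 : ℝ) ^ (8 * (N + 1) + 2)
      = 132 * (1.7003 ^ 8) ^ (N + 1) / 5172 := by
        rw [pow_add, pow_mul]
        field_simp
    _ ≤ 132 * 69.86 ^ (N + 1) / 5172 := by
        gcongr
        norm_num
    _ ≤ (descents Arc (8 * (N + 1))).card :=
        div_le_of_le_mul₀ (by norm_num) (by positivity) (mul_comm (5172 : ℝ) _ ▸
          pow_le_card_descents (N + 1))
    _ ≤ starCount G := mod_cast hcount

end
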